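/- Let n = 2 and let ζ1, …, ζ5 be symmetric complex 2×2 matrices such that every difference ζpq = ζp − ζq (p ≠ q) is invertible. For 1 ≤ i < j < k ≤ 5 let f_ijk be the 2×10 block matrix with identity in block position i, ζik·ζkj⁻¹ in position j, ζij·ζjk⁻¹ in position k, zero elsewhere; let G_ijk = 2·ζij·ζkj⁻¹·ζik, and let a_ijk be any 2×2 matrix with a_ijk·G_ijk·a_ijkᵀ = [[0,1],[1,0]]; set g_ijk = a_ijk·f_ijk. Then there exist unique 6×6 matrices P̃, Q̃, R̃, S̃, T̃ (with 2×2 blocks, having the block patterns [[*,*,0],[*,*,0],[0,0,1]], [[1,0,0],[0,*,*],[0,*,*]], [[*,0,*],[0,1,0],[*,0,*]], [[1,0,0],[0,*,*],[0,*,*]], [[*,*,0],[*,*,0],[0,0,1]]) satisfying P̃·(g124;g234;g145) = (g123;g134;g145), Q̃·(g123;g134;g145) = (g123;g135;g345), R̃·(g124;g234;g145) = (g125;g234;g245), S̃·(g125;g234;g245) = (g125;g235;g345), T̃·(g125;g235;g345) = (g123;g135;g345); each of them satisfies MᵀJ₆M = J₆, where J₆ is the 6×6 block-diagonal matrix with three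 diagonal blocks [[0,1],[1,0]]; and they satisfy the pentagon relation Q̃P̃ = T̃S̃R̃. -/

import Mathlib

/-!
All rows of the `f_ijk` lie in the 6-dimensional space `V` of row vectors `x` with `∑ x_p = 0` and
`∑ x_p ζ_p = 0`. The triangle-wise scalar products are all restrictions of one symmetric form on
`ℂ¹⁰`, namely `B(x, y) = ∑_{p<q} (x_p ζ_pq y_qᵀ + x_q ζ_pq y_pᵀ)`:

* `f_ijk` has Gramian `G_ijk` for `B` (`fMat_gram`);
* two non-crossing triangles are `B`-orthogonal (`fMat_orthogonal`). The functional `B(·, f_ijk)`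
  has at vertex `p` a coefficient which, on each arc cut out by `i, j, k`, is an affine function of
  `ζ_p` (`edgeRow_affine`), and the relations defining `V` annihilate such functionals.

Hence each triangulation of the pentagon gives a `6 × 10` matrix `G` with rows in `V` and
`G B Gᵀ = J₆` (`IsFrame`). Such a `G` has the right inverse `B Gᵀ J₆`, so it can be cancelled, and a
dimension count, in the form of an invertible `10 × 10` matrix, shows that its rows span `V`
(`IsFrame.complete`). So between any two frames there is exactly one change-of-frame matrix,
namely `G' B Gᵀ J₆`. It preserves `J₆`, and the block patterns follow from orthonormality because the
two triangulations share a triangle. Finally, `QP` and `TSR` both carry the first frame to the last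
one, so they agree.
-/

open Matrix

/- n = 2: ζ1, …, ζ5 (indexed 0,…,4) are symmetric complex 2×2 matrices with
all pairwise differences invertible.  `fMat ζ i j k` is the 2×10 block matrix
with identity in position i, ζik·ζkj⁻¹ in position j, ζij·ζjk⁻¹ in position k,
zero elsewhere; G_ijk = 2ζij·ζkj⁻¹·ζik; the a_ijk satisfy
a_ijk·G_ijk·a_ijkᵀ = [[0,1],[1,0]], and g_ijk = a_ijk·f_ijk are isotropic
bases.  J₆ is block-diagonal with three blocks [[0,1],[1,0]]. -/

noncomputable def fMat (ζ : Fin 5 → Matrix (Fin 2) (Fin 2) ℂ)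
    (i j k : Fin 5) : Matrix (Fin 2) (Fin 5 × Fin 2) ℂ :=
  Matrix.of fun r mc =>
    (if mc.1 = i then (1 : Matrix (Fin 2) (Fin 2) ℂ)
     else if mc.1 = j then (ζ i - ζ k) * (ζ k - ζ j)⁻¹
     else if mc.1 = k then (ζ i - ζ j) * (ζ j - ζ k)⁻¹
     else 0) r mc.2

noncomputable def Gmat (ζ : Fin 5 → Matrix (Fin 2) (Fin 2) ℂ)
    (i j k : Fin 5) : Matrix (Fin 2) (Fin 2) ℂ :=
  2 • ((ζ i - ζ j) * (ζ k - ζ j)⁻¹ * (ζ i - ζ k))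

def stack3 (A B C : Matrix (Fin 2) (Fin 5 × Fin 2) ℂ) :
    Matrix (Fin 3 × Fin 2) (Fin 5 × Fin 2) ℂ :=
  Matrix.of fun rp c => ![A, B, C] rp.1 rp.2 c

def blk (M : Matrix (Fin 3 × Fin 2) (Fin 3 × Fin 2) ℂ) (a b : Fin 3) :
    Matrix (Fin 2) (Fin 2) ℂ :=
  Matrix.of fun r c => M (a, r) (b, c)

/-- Block pattern [[*,*,0],[*,*,0],[0,0,1]]. -/
def PatP (M : Matrix (Fin 3 × Fin 2) (Fin 3 × Fin 2) ℂ) : Prop :=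
  blk M 0 2 = 0 ∧ blk M 1 2 = 0 ∧ blk M 2 0 = 0 ∧ blk M 2 1 = 0 ∧ blk M 2 2 = 1

/-- Block pattern [[1,0,0],[0,*,*],[0,*,*]]. -/
def PatQ (M : Matrix (Fin 3 × Fin 2) (Fin 3 × Fin 2) ℂ) : Prop :=
  blk M 0 0 = 1 ∧ blk M 0 1 = 0 ∧ blk M 0 2 = 0 ∧ blk M 1 0 = 0 ∧ blk M 2 0 = 0

/-- Block pattern [[*,0,*],[0,1,0],[*,0,*]]. -/
def PatR (M : Matrix (Fin 3 × Fin 2) (Fin 3 × Fin 2) ℂ) : Prop :=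
  blk M 0 1 = 0 ∧ blk M 1 0 = 0 ∧ blk M 1 1 = 1 ∧ blk M 1 2 = 0 ∧ blk M 2 1 = 0

/-- The 6×6 matrix J₆: block-diagonal, three diagonal blocks [[0,1],[1,0]]. -/
def J6 : Matrix (Fin 3 × Fin 2) (Fin 3 × Fin 2) ℂ :=
  Matrix.of fun rp cq => if rp.1 = cq.1 ∧ rp.2 ≠ cq.2 then 1 else 0

/-- Block patterns together with the five flip equations on the isotropic
bases g_ijk = a_ijk·f_ijk (vertices 1,…,5 indexed 0,…,4):
P̃(g124;g234;g145) = (g123;g134;g145), Q̃(g123;g134;g145) = (g123;g135;g345),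
R̃(g124;g234;g145) = (g125;g234;g245), S̃(g125;g234;g245) = (g125;g235;g345),
T̃(g125;g235;g345) = (g123;g135;g345). -/
noncomputable def FlipData (ζ : Fin 5 → Matrix (Fin 2) (Fin 2) ℂ)
    (a : Fin 5 → Fin 5 → Fin 5 → Matrix (Fin 2) (Fin 2) ℂ)
    (P Q R S T : Matrix (Fin 3 × Fin 2) (Fin 3 × Fin 2) ℂ) : Prop :=
  let g := fun i j k => a i j k * fMat ζ i j k
  PatP P ∧ PatQ Q ∧ PatR R ∧ PatQ S ∧ PatP T ∧
  P * stack3 (g 0 1 3) (g 1 2 3) (g 0 3 4) =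
    stack3 (g 0 1 2) (g 0 2 3) (g 0 3 4) ∧
  Q * stack3 (g 0 1 2) (g 0 2 3) (g 0 3 4) =
    stack3 (g 0 1 2) (g 0 2 4) (g 2 3 4) ∧
  R * stack3 (g 0 1 3) (g 1 2 3) (g 0 3 4) =
    stack3 (g 0 1 4) (g 1 2 3) (g 1 3 4) ∧
  S * stack3 (g 0 1 4) (g 1 2 3) (g 1 3 4) =
    stack3 (g 0 1 4) (g 1 2 4) (g 2 3 4) ∧
  T * stack3 (g 0 1 4) (g 1 2 4) (g 2 3 4) =
    stack3 (g 0 1 2) (g 0 2 4) (g 2 3 4)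

/-! ### The edge form and the space of relations -/

/-- The symmetric bilinear form `∑_{p<q} (x_p ζ_pq y_qᵀ + x_q ζ_pq y_pᵀ)` on `ℂ¹⁰`. -/
noncomputable def edgeForm (ζ : Fin 5 → Matrix (Fin 2) (Fin 2) ℂ) :
    Matrix (Fin 5 × Fin 2) (Fin 5 × Fin 2) ℂ :=
  Matrix.of fun x y =>
    (if x.1 < y.1 then ζ x.1 - ζ y.1 else ζ y.1 - ζ x.1) x.2 y.2

/-- The `10 × 4` matrix with block columns `(1)_p` and `(ζ_p)_p`; its left kernel is the space
of `x` with `∑ x_p = 0` and `∑ x_p ζ_p = 0`, which contains every `fMat ζ i j k`. -/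
noncomputable def relMat (ζ : Fin 5 → Matrix (Fin 2) (Fin 2) ℂ) :
    Matrix (Fin 5 × Fin 2) (Fin 2 × Fin 2) ℂ :=
  Matrix.of fun x y => (if y.1 = 0 then (1 : Matrix (Fin 2) (Fin 2) ℂ) else ζ x.1) x.2 y.2

/-- A left inverse of `relMat ζ`, supported on the first two vertices: the inverse of the
block matrix `[[1, ζ₀], [1, ζ₁]]`. -/
noncomputable def relInv (ζ : Fin 5 → Matrix (Fin 2) (Fin 2) ℂ) :
    Matrix (Fin 2 × Fin 2) (Fin 5 × Fin 2) ℂ :=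
  Matrix.of fun y x =>
    (if y.1 = 0 then
      ![1 + ζ 0 * (ζ 1 - ζ 0)⁻¹, -(ζ 0 * (ζ 1 - ζ 0)⁻¹), 0, 0, 0] x.1
    else ![-(ζ 1 - ζ 0)⁻¹, (ζ 1 - ζ 0)⁻¹, 0, 0, 0] x.1) y.2 x.2

/-- The `p`-th block of rows of `N`. -/
def rowBlk {m : Type*} (N : Matrix (Fin 5 × Fin 2) m ℂ) (p : Fin 5) : Matrix (Fin 2) m ℂ :=
  N.submatrix (Prod.mk p) id

lemma edgeForm_transpose (ζ : Fin 5 → Matrix (Fin 2) (Fin 2) ℂ)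
    (hsym : ∀ p : Fin 5, (ζ p)ᵀ = ζ p) : (edgeForm ζ)ᵀ = edgeForm ζ := by
  have hs : ∀ p r s, ζ p r s = ζ p s r := fun p r s => congrFun (congrFun (hsym p) s) r
  ext ⟨p, r⟩ ⟨q, s⟩
  rcases lt_trichotomy p q with h | h | h
  · simp [edgeForm, h, h.not_gt, hs p r s, hs q r s]
  · subst h; simp [edgeForm]
  · simp [edgeForm, h, h.not_gt, hs p r s, hs q r s]

lemma relInv_mul_relMat (ζ : Fin 5 → Matrix (Fin 2) (Fin 2) ℂ)
    (h : IsUnit (ζ 1 - ζ 0)) : relInv ζ * relMat ζ = 1 := by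
  have hD : (ζ 1 - ζ 0)⁻¹ * (ζ 1 - ζ 0) = 1 :=
    Matrix.nonsing_inv_mul _ ((Matrix.isUnit_iff_isUnit_det _).1 h)
  set D := (ζ 1 - ζ 0)⁻¹ with hDdef
  have h1 : (1 + ζ 0 * D) * ζ 0 + -(ζ 0 * D) * ζ 1 = 0 := by
    have : (1 + ζ 0 * D) * ζ 0 + -(ζ 0 * D) * ζ 1 = ζ 0 - ζ 0 * (D * (ζ 1 - ζ 0)) := by
      noncomm_ring
    rw [this, hD]; simp
  have h2 : -D * ζ 0 + D * ζ 1 = 1 := by rw [← hD]; noncomm_ring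
  ext ⟨e, r⟩ ⟨e', s⟩
  have e1 := congrFun (congrFun h1 r) s
  have e2 := congrFun (congrFun h2 r) s
  fin_cases e <;> fin_cases e' <;>
    simp [relInv, relMat, Matrix.mul_apply, Fintype.sum_prod_type, Fin.sum_univ_succ,
      ← hDdef, Matrix.one_apply, Matrix.add_apply] at e1 e2 ⊢
  · ring
  · linear_combination e1
  · linear_combination e2

lemma fMat_mul {m : Type*} (ζ : Fin 5 → Matrix (Fin 2) (Fin 2) ℂ) {i j k : Fin 5}
    (hij : i < j) (hjk : j < k) (N : Matrix (Fin 5 × Fin 2) m ℂ) :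
    fMat ζ i j k * N = rowBlk N i + (ζ i - ζ k) * (ζ k - ζ j)⁻¹ * rowBlk N j
      + (ζ i - ζ j) * (ζ j - ζ k)⁻¹ * rowBlk N k := by
  have key : ∀ p : Fin 5, (if p = i then (1 : Matrix (Fin 2) (Fin 2) ℂ)
     else if p = j then (ζ i - ζ k) * (ζ k - ζ j)⁻¹
     else if p = k then (ζ i - ζ j) * (ζ j - ζ k)⁻¹
     else 0) * rowBlk N p = (if p = i then rowBlk N i else 0)
      + (if p = j then (ζ i - ζ k) * (ζ k - ζ j)⁻¹ * rowBlk N j else 0)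
      + (if p = k then (ζ i - ζ j) * (ζ j - ζ k)⁻¹ * rowBlk N k else 0) := by
    intro p
    by_cases h1 : p = i
    · subst h1; simp [hij.ne, (hij.trans hjk).ne]
    by_cases h2 : p = j
    · subst h2; simp [h1, hjk.ne]
    by_cases h3 : p = k
    · subst h3; simp [h1, h2]
    simp [h1, h2, h3]
  calc fMat ζ i j k * N = ∑ p : Fin 5, (if p = i then (1 : Matrix (Fin 2) (Fin 2) ℂ)
     else if p = j then (ζ i - ζ k) * (ζ k - ζ j)⁻¹
     else if p = k then (ζ i - ζ j) * (ζ j - ζ k)⁻¹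
     else 0) * rowBlk N p := by
        ext r c
        rw [Matrix.mul_apply, Fintype.sum_prod_type, Matrix.sum_apply]
        rfl
    _ = _ := by
        simp_rw [key, Finset.sum_add_distrib, Finset.sum_ite_eq' Finset.univ, Finset.mem_univ, if_true]

lemma inv_facts (ζ : Fin 5 → Matrix (Fin 2) (Fin 2) ℂ)
    (hinv : ∀ p q : Fin 5, p ≠ q → IsUnit (ζ p - ζ q)) {j k : Fin 5} (h : j ≠ k) :
    (ζ j - ζ k)⁻¹ = -(ζ k - ζ j)⁻¹ ∧ (ζ k - ζ j) * (ζ k - ζ j)⁻¹ = 1 ∧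
      (ζ k - ζ j)⁻¹ * (ζ k - ζ j) = 1 := by
  have hd := (Matrix.isUnit_iff_isUnit_det _).1 (hinv k j h.symm)
  refine ⟨?_, Matrix.mul_nonsing_inv _ hd, Matrix.nonsing_inv_mul _ hd⟩
  apply Matrix.inv_eq_left_inv
  rw [← neg_sub (ζ k) (ζ j), neg_mul_neg, Matrix.nonsing_inv_mul _ hd]

/-- The blocks `1, v, w` of `fMat ζ i j k` satisfy `1 + v + w = 0` and
`ζ_i + v ζ_j + w ζ_k = 0`. -/
lemma fMat_coeffs (ζ : Fin 5 → Matrix (Fin 2) (Fin 2) ℂ)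
    (hinv : ∀ p q : Fin 5, p ≠ q → IsUnit (ζ p - ζ q)) {i j k : Fin 5} (hjk : j < k) :
    1 + (ζ i - ζ k) * (ζ k - ζ j)⁻¹ + (ζ i - ζ j) * (ζ j - ζ k)⁻¹ = 0 ∧
    ζ i + (ζ i - ζ k) * (ζ k - ζ j)⁻¹ * ζ j + (ζ i - ζ j) * (ζ j - ζ k)⁻¹ * ζ k = 0 := by
  obtain ⟨h1, h2, h3⟩ := inv_facts ζ hinv hjk.ne
  rw [h1]
  set C := (ζ k - ζ j)⁻¹
  have e1 : 1 + (ζ i - ζ k) * C + (ζ i - ζ j) * -C = 0 := by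
    rw [← h2]; noncomm_ring
  refine ⟨e1, ?_⟩
  calc _ = (1 + (ζ i - ζ k) * C + (ζ i - ζ j) * -C) * ζ j + (ζ i - ζ j)
        - (ζ i - ζ j) * (C * (ζ k - ζ j)) := by noncomm_ring
    _ = 0 := by rw [e1, h3]; simp

lemma fMat_mul_relMat (ζ : Fin 5 → Matrix (Fin 2) (Fin 2) ℂ)
    (hinv : ∀ p q : Fin 5, p ≠ q → IsUnit (ζ p - ζ q)) {i j k : Fin 5}
    (hij : i < j) (hjk : j < k) : fMat ζ i j k * relMat ζ = 0 := by
  obtain ⟨h1, h2⟩ := fMat_coeffs ζ hinv (i := i) hjk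
  rw [fMat_mul ζ hij hjk]
  ext r ⟨e, s⟩
  by_cases he : e = 0
  · subst he
    have h3 : 1 + (ζ i - ζ k) * (ζ k - ζ j)⁻¹ * 1 + (ζ i - ζ j) * (ζ j - ζ k)⁻¹ * 1 = 0 := by
      rw [mul_one, mul_one, h1]
    exact congrFun (congrFun h3 r) s
  · obtain rfl : e = 1 := by omega
    exact congrFun (congrFun h2 r) s

/-- The `p`-th block column of `fMat ζ i j k * edgeForm ζ`. -/
noncomputable def edgeRow (ζ : Fin 5 → Matrix (Fin 2) (Fin 2) ℂ) (i j k p : Fin 5) :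
    Matrix (Fin 2) (Fin 2) ℂ :=
  (if i < p then ζ i - ζ p else ζ p - ζ i)
    + (ζ i - ζ k) * (ζ k - ζ j)⁻¹ * (if j < p then ζ j - ζ p else ζ p - ζ j)
    + (ζ i - ζ j) * (ζ j - ζ k)⁻¹ * (if k < p then ζ k - ζ p else ζ p - ζ k)

lemma rowBlk_edge (ζ : Fin 5 → Matrix (Fin 2) (Fin 2) ℂ) {i j k : Fin 5}
    (hij : i < j) (hjk : j < k) (p : Fin 5) :
    rowBlk (fMat ζ i j k * edgeForm ζ)ᵀ p = (edgeRow ζ i j k p)ᵀ := by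
  rw [fMat_mul ζ hij hjk]
  rfl

/-- Along each of the three arcs cut out by `i < j < k`, `edgeRow` is an affine function of
`ζ_p` vanishing at one of the end points of the arc. -/
lemma edgeRow_affine (ζ : Fin 5 → Matrix (Fin 2) (Fin 2) ℂ)
    (hinv : ∀ p q : Fin 5, p ≠ q → IsUnit (ζ p - ζ q)) {i j k : Fin 5}
    (hij : i < j) (hjk : j < k) (p : Fin 5) :
    (i ≤ p ∧ p ≤ j → edgeRow ζ i j k p = 2 * (ζ i - ζ p)) ∧
    (j ≤ p ∧ p ≤ k → edgeRow ζ i j k p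
      = 2 * ((ζ i - ζ j) * (ζ j - ζ k)⁻¹) * (ζ p - ζ k)) ∧
    (p ≤ i ∨ k ≤ p → edgeRow ζ i j k p = 0) := by
  obtain ⟨h1, h2⟩ := fMat_coeffs ζ hinv (i := i) hjk
  -- `∑ x_q (ζ_q - ζ_p) = 0` for the blocks `x = (1, v, w)`
  have h3 : (ζ i - ζ p) + (ζ i - ζ k) * (ζ k - ζ j)⁻¹ * (ζ j - ζ p)
      + (ζ i - ζ j) * (ζ j - ζ k)⁻¹ * (ζ k - ζ p) = 0 := by
    calc _ = (ζ i + (ζ i - ζ k) * (ζ k - ζ j)⁻¹ * ζ j + (ζ i - ζ j) * (ζ j - ζ k)⁻¹ * ζ k)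
          - (1 + (ζ i - ζ k) * (ζ k - ζ j)⁻¹ + (ζ i - ζ j) * (ζ j - ζ k)⁻¹) * ζ p := by
            noncomm_ring
      _ = 0 := by rw [h1, h2]; simp
  -- the value of each branch of the sign function, also where the difference vanishes
  have hlo : ∀ q : Fin 5, p ≤ q → (if q < p then ζ q - ζ p else ζ p - ζ q) = -(ζ q - ζ p) :=
    fun q h => by rw [if_neg h.not_gt, neg_sub]
  have hhi : ∀ q : Fin 5, q ≤ p → (if q < p then ζ q - ζ p else ζ p - ζ q) = ζ q - ζ p := by
    intro q h
    rcases h.lt_or_eq with h | h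
    · rw [if_pos h]
    · subst h; simp
  unfold edgeRow
  generalize (ζ i - ζ k) * (ζ k - ζ j)⁻¹ = v at *
  generalize (ζ i - ζ j) * (ζ j - ζ k)⁻¹ = w at *
  refine ⟨fun ⟨ha, hb⟩ => ?_, fun ⟨ha, hb⟩ => ?_, fun hp => ?_⟩
  · rw [hhi i ha, hlo j hb, hlo k (hb.trans hjk.le)]
    rw [← sub_eq_zero, ← neg_eq_zero, ← h3]
    noncomm_ring
  · rw [hhi i (hij.le.trans ha), hhi j ha, hlo k hb]
    rw [← sub_eq_zero, ← h3]
    noncomm_ring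
  · rcases hp with hp | hp
    · rw [hlo i hp, hlo j (hp.trans hij.le), hlo k (hp.trans (hij.trans hjk).le),
        ← neg_eq_zero, ← h3]
      noncomm_ring
    · rw [hhi i ((hij.trans hjk).le.trans hp), hhi j (hjk.le.trans hp), hhi k hp, h3]

/-- The triangle `i, j, k` has all its vertices on one of the three arcs, end points included,
cut out of the pentagon by the vertices `i₂ < j₂ < k₂`. -/
abbrev InArc (i j k i₂ j₂ k₂ : Fin 5) : Prop :=
  (∀ p, p = i ∨ p = j ∨ p = k → i₂ ≤ p ∧ p ≤ j₂) ∨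
  (∀ p, p = i ∨ p = j ∨ p = k → j₂ ≤ p ∧ p ≤ k₂) ∨
  (∀ p, p = i ∨ p = j ∨ p = k → p ≤ i₂ ∨ k₂ ≤ p)

/-- A triangle whose vertices lie on one arc cut out by another triangle is orthogonal to it. -/
lemma fMat_orthogonal (ζ : Fin 5 → Matrix (Fin 2) (Fin 2) ℂ)
    (hsym : ∀ p : Fin 5, (ζ p)ᵀ = ζ p)
    (hinv : ∀ p q : Fin 5, p ≠ q → IsUnit (ζ p - ζ q)) {i j k i₂ j₂ k₂ : Fin 5}
    (hij : i < j) (hjk : j < k) (hij' : i₂ < j₂) (hjk' : j₂ < k₂)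
    (harc : InArc i₂ j₂ k₂ i j k) :
    fMat ζ i₂ j₂ k₂ * edgeForm ζ * (fMat ζ i j k)ᵀ = 0 := by
  -- on the vertices of `i₂ j₂ k₂`, `edgeRow` is affine in `ζ_p`
  obtain ⟨c, q, hc⟩ : ∃ (c : Matrix (Fin 2) (Fin 2) ℂ) (q : Fin 5),
      ∀ p, p = i₂ ∨ p = j₂ ∨ p = k₂ → edgeRow ζ i j k p = c * (ζ q - ζ p) := by
    rcases harc with h | h | h
    · exact ⟨2, i, fun p hp => (edgeRow_affine ζ hinv hij hjk p).1 (h p hp)⟩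
    · refine ⟨-(2 * ((ζ i - ζ j) * (ζ j - ζ k)⁻¹)), k, fun p hp => ?_⟩
      rw [(edgeRow_affine ζ hinv hij hjk p).2.1 (h p hp), neg_mul, ← mul_neg, neg_sub]
    · refine ⟨0, i, fun p hp => ?_⟩
      rw [(edgeRow_affine ζ hinv hij hjk p).2.2 (h p hp), zero_mul]
  have hT : edgeForm ζ * (fMat ζ i j k)ᵀ = (fMat ζ i j k * edgeForm ζ)ᵀ := by
    rw [Matrix.transpose_mul, edgeForm_transpose ζ hsym]
  obtain ⟨h1, h2⟩ := fMat_coeffs ζ hinv (i := i₂) hjk'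
  rw [Matrix.mul_assoc, hT, fMat_mul ζ hij' hjk', rowBlk_edge ζ hij hjk,
    rowBlk_edge ζ hij hjk, rowBlk_edge ζ hij hjk, hc _ (by simp), hc _ (by simp),
    hc _ (by simp)]
  simp only [Matrix.transpose_mul, Matrix.transpose_sub, hsym]
  generalize (ζ i₂ - ζ k₂) * (ζ k₂ - ζ j₂)⁻¹ = v at *
  generalize (ζ i₂ - ζ j₂) * (ζ j₂ - ζ k₂)⁻¹ = w at *
  calc _ = ((1 + v + w) * ζ q - (ζ i₂ + v * ζ j₂ + w * ζ k₂)) * cᵀ := by noncomm_ring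
    _ = 0 := by rw [h1, h2]; simp

/-- The Gramian of the rows of `fMat ζ i j k` for the edge form. -/
lemma fMat_gram (ζ : Fin 5 → Matrix (Fin 2) (Fin 2) ℂ)
    (hsym : ∀ p : Fin 5, (ζ p)ᵀ = ζ p)
    (hinv : ∀ p q : Fin 5, p ≠ q → IsUnit (ζ p - ζ q)) {i j k : Fin 5}
    (hij : i < j) (hjk : j < k) :
    fMat ζ i j k * edgeForm ζ * (fMat ζ i j k)ᵀ = Gmat ζ i j k := by
  have hT : edgeForm ζ * (fMat ζ i j k)ᵀ = (fMat ζ i j k * edgeForm ζ)ᵀ := by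
    rw [Matrix.transpose_mul, edgeForm_transpose ζ hsym]
  obtain ⟨-, h2, h3⟩ := inv_facts ζ hinv hjk.ne
  rw [Matrix.mul_assoc, hT, fMat_mul ζ hij hjk, rowBlk_edge ζ hij hjk,
    rowBlk_edge ζ hij hjk, rowBlk_edge ζ hij hjk,
    (edgeRow_affine ζ hinv hij hjk i).2.2 (Or.inl le_rfl),
    (edgeRow_affine ζ hinv hij hjk j).1 ⟨hij.le, le_rfl⟩,
    (edgeRow_affine ζ hinv hij hjk k).2.2 (Or.inr le_rfl), Gmat]
  have e : (2 * (ζ i - ζ j))ᵀ = 2 * (ζ i - ζ j) := by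
    rw [two_mul, Matrix.transpose_add, Matrix.transpose_sub, hsym, hsym]
  rw [e]
  set C := (ζ k - ζ j)⁻¹
  -- `ζ_ik C ζ_ij = ζ_ij C ζ_ik`: expand `ζ_ik = ζ_ij - ζ_kj` on both sides
  have e1 : (ζ i - ζ k) * C * (ζ i - ζ j) = (ζ i - ζ j) * C * (ζ i - ζ k) := by
    calc _ = (ζ i - ζ j) * C * (ζ i - ζ j) - ((ζ k - ζ j) * C) * (ζ i - ζ j) := by noncomm_ring
      _ = (ζ i - ζ j) * C * (ζ i - ζ j) - (ζ i - ζ j) * (C * (ζ k - ζ j)) := by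
        rw [h2, h3]; simp
      _ = _ := by noncomm_ring
  rw [← e1]
  simp only [Matrix.transpose_zero, mul_zero, zero_add, add_zero]
  noncomm_ring

/-! ### Frames -/

/-- A `6 × 10` matrix whose rows satisfy the relations and have Gramian `J6`. -/
def IsFrame (ζ : Fin 5 → Matrix (Fin 2) (Fin 2) ℂ)
    (G : Matrix (Fin 3 × Fin 2) (Fin 5 × Fin 2) ℂ) : Prop :=
  G * edgeForm ζ * Gᵀ = J6 ∧ G * relMat ζ = 0

lemma J6_mul_J6 : J6 * J6 = 1 := by
  ext ⟨x, r⟩ ⟨y, s⟩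
  fin_cases x <;> fin_cases y <;> fin_cases r <;> fin_cases s <;>
    simp [J6, Matrix.mul_apply, Fintype.sum_prod_type, Fin.sum_univ_two]

lemma mul_J6_apply (M : Matrix (Fin 3 × Fin 2) (Fin 3 × Fin 2) ℂ) (x : Fin 3 × Fin 2)
    (y : Fin 3) (s : Fin 2) : (M * J6) x (y, s) = M x (y, s + 1) := by
  fin_cases y <;> fin_cases s <;>
    simp [J6, Matrix.mul_apply, Fintype.sum_prod_type, Fin.sum_univ_succ]

/-- A frame spans the space of all solutions of the relations: `edgeForm ζ * Gᵀ * J6` is a right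
inverse of `G`, and `G` together with `relInv ζ` is an invertible `10 × 10` matrix. -/
lemma IsFrame.complete {ζ : Fin 5 → Matrix (Fin 2) (Fin 2) ℂ}
    (h10 : IsUnit (ζ 1 - ζ 0)) {G X : Matrix (Fin 3 × Fin 2) (Fin 5 × Fin 2) ℂ}
    (hG : IsFrame ζ G) (hX : X * relMat ζ = 0) :
    X * (edgeForm ζ * Gᵀ * J6) * G = X := by
  have hGH : G * (edgeForm ζ * Gᵀ * J6) = 1 := by
    rw [← Matrix.mul_assoc, ← Matrix.mul_assoc, hG.1, J6_mul_J6]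
  generalize edgeForm ζ * Gᵀ * J6 = H at *
  set N := relMat ζ
  set K := relInv ζ
  have hKN : K * N = 1 := relInv_mul_relMat ζ h10
  have hGN : G * N = 0 := hG.2
  have h1 : Matrix.fromRows G K * Matrix.fromCols (H - N * (K * H)) N = 1 := by
    rw [Matrix.fromRows_mul_fromCols, ← Matrix.fromBlocks_one]
    congr 1
    · rw [Matrix.mul_sub, ← Matrix.mul_assoc G, hGN, hGH, Matrix.zero_mul, sub_zero]
    · rw [Matrix.mul_sub, ← Matrix.mul_assoc K N, hKN, Matrix.one_mul, sub_self]
  have h2 := (Matrix.mul_eq_one_comm_of_card_eq _ _ _ (by simp)).1 h1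
  rw [Matrix.fromCols_mul_fromRows] at h2
  have h3 := congrArg (X * ·) h2
  simp only [Matrix.mul_add, Matrix.mul_one, ← Matrix.mul_assoc, hX, Matrix.mul_sub,
    Matrix.zero_mul, add_zero, sub_zero] at h3
  simpa only [Matrix.mul_assoc] using h3

lemma IsFrame.cancel {ζ : Fin 5 → Matrix (Fin 2) (Fin 2) ℂ}
    {G : Matrix (Fin 3 × Fin 2) (Fin 5 × Fin 2) ℂ} (hG : IsFrame ζ G)
    {M M' : Matrix (Fin 3 × Fin 2) (Fin 3 × Fin 2) ℂ} (h : M * G = M' * G) : M = M' := by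
  have hGH : G * (edgeForm ζ * Gᵀ * J6) = 1 := by
    rw [← Matrix.mul_assoc, ← Matrix.mul_assoc, hG.1, J6_mul_J6]
  rw [← Matrix.mul_one M, ← hGH, ← Matrix.mul_assoc, h, Matrix.mul_assoc, hGH, Matrix.mul_one]

/-- A change of frame satisfies `M J Mᵀ = J`, and hence also `Mᵀ J M = J`. -/
lemma IsFrame.isometry {ζ : Fin 5 → Matrix (Fin 2) (Fin 2) ℂ}
    {G G' : Matrix (Fin 3 × Fin 2) (Fin 5 × Fin 2) ℂ} (hG : IsFrame ζ G) (hG' : IsFrame ζ G')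
    {M : Matrix (Fin 3 × Fin 2) (Fin 3 × Fin 2) ℂ} (h : M * G = G') : Mᵀ * J6 * M = J6 := by
  have h1 : M * J6 * Mᵀ = J6 := by
    rw [← hG.1]
    calc _ = (M * G) * edgeForm ζ * (M * G)ᵀ := by
          rw [Matrix.transpose_mul]; simp only [Matrix.mul_assoc]
      _ = _ := by rw [h, hG'.1, hG.1]
  -- `M⁻¹ = J Mᵀ J`, so the two factors commute
  have h2 : M * (J6 * Mᵀ * J6) = 1 := by
    rw [← Matrix.mul_assoc, ← Matrix.mul_assoc, h1, J6_mul_J6]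
  have h3 := mul_eq_one_comm.1 h2
  calc Mᵀ * J6 * M = (J6 * J6) * (Mᵀ * J6 * M) := by rw [J6_mul_J6, Matrix.one_mul]
    _ = J6 * (J6 * Mᵀ * J6 * M) := by simp only [Matrix.mul_assoc]
    _ = J6 := by rw [h3, Matrix.mul_one]

/-- The change of frame exists, and has trivial `e`-th block row and block column whenever
the two frames share their `e`-th pair of rows. -/
lemma IsFrame.exists_change {ζ : Fin 5 → Matrix (Fin 2) (Fin 2) ℂ}
    (h10 : IsUnit (ζ 1 - ζ 0))
    {G G' : Matrix (Fin 3 × Fin 2) (Fin 5 × Fin 2) ℂ} (hG : IsFrame ζ G) (hG' : IsFrame ζ G')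
    (e : Fin 3) (he : ∀ r, G (e, r) = G' (e, r)) :
    ∃ M, M * G = G' ∧ blk M e e = 1 ∧ ∀ x, x ≠ e → blk M e x = 0 ∧ blk M x e = 0 := by
  set H := edgeForm ζ * Gᵀ * J6 with hH
  have hGH : G * H = 1 := by
    rw [hH, ← Matrix.mul_assoc, ← Matrix.mul_assoc, hG.1, J6_mul_J6]
  have hrow : ∀ r y, (G' * H) (e, r) y = (1 : Matrix (Fin 3 × Fin 2) (Fin 3 × Fin 2) ℂ) (e, r) y := by
    intro r y
    rw [← hGH, Matrix.mul_apply, Matrix.mul_apply, he]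
  have hcol : ∀ x s, (G' * H) x (e, s) = J6 x (e, s + 1) := by
    intro x s
    rw [hH, ← Matrix.mul_assoc, ← Matrix.mul_assoc, mul_J6_apply, ← hG'.1, Matrix.mul_apply,
      Matrix.mul_apply]
    simp only [Matrix.transpose_apply, he]
  refine ⟨G' * H, hG.complete h10 hG'.2, ?_, fun x hx => ⟨?_, ?_⟩⟩
  · ext r s
    simp [blk, hrow, Matrix.one_apply]
  · ext r s
    simp [blk, hrow, hx.symm]
  · ext r s
    simp [blk, hcol, J6, hx]

lemma stack3_zero (A B C : Matrix (Fin 2) (Fin 5 × Fin 2) ℂ) (r : Fin 2) :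
    stack3 A B C (0, r) = A r := rfl

lemma stack3_one (A B C : Matrix (Fin 2) (Fin 5 × Fin 2) ℂ) (r : Fin 2) :
    stack3 A B C (1, r) = B r := rfl

lemma stack3_two (A B C : Matrix (Fin 2) (Fin 5 × Fin 2) ℂ) (r : Fin 2) :
    stack3 A B C (2, r) = C r := rfl

lemma stack3_frame {ζ : Fin 5 → Matrix (Fin 2) (Fin 2) ℂ}
    (hsym : ∀ p : Fin 5, (ζ p)ᵀ = ζ p)
    {A B C : Matrix (Fin 2) (Fin 5 × Fin 2) ℂ}
    (hA : A * relMat ζ = 0) (hB : B * relMat ζ = 0) (hC : C * relMat ζ = 0)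
    (hAA : A * edgeForm ζ * Aᵀ = !![0, 1; 1, 0]) (hBB : B * edgeForm ζ * Bᵀ = !![0, 1; 1, 0])
    (hCC : C * edgeForm ζ * Cᵀ = !![0, 1; 1, 0]) (hAB : A * edgeForm ζ * Bᵀ = 0)
    (hAC : A * edgeForm ζ * Cᵀ = 0) (hBC : B * edgeForm ζ * Cᵀ = 0) :
    IsFrame ζ (stack3 A B C) := by
  have hswap : ∀ X Y : Matrix (Fin 2) (Fin 5 × Fin 2) ℂ, X * edgeForm ζ * Yᵀ = 0 →
      Y * edgeForm ζ * Xᵀ = 0 := by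
    intro X Y h
    have := congrArg Matrix.transpose h
    simpa [Matrix.transpose_mul, edgeForm_transpose ζ hsym, Matrix.mul_assoc] using this
  constructor
  · ext ⟨x, r⟩ ⟨y, s⟩
    have key : (stack3 A B C * edgeForm ζ * (stack3 A B C)ᵀ) (x, r) (y, s)
        = (![A, B, C] x * edgeForm ζ * (![A, B, C] y)ᵀ) r s := rfl
    rw [key]
    fin_cases x <;> fin_cases y <;>
      simp only [Fin.zero_eta, Fin.mk_one, Fin.reduceFinMk, Matrix.cons_val, hAA, hBB, hCC, hAB,
        hAC, hBC, hswap _ _ hAB, hswap _ _ hAC, hswap _ _ hBC] <;>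
      fin_cases r <;> fin_cases s <;> simp [J6]
  · ext ⟨x, r⟩ y
    have key : (stack3 A B C * relMat ζ) (x, r) y = (![A, B, C] x * relMat ζ) r y := rfl
    rw [key]
    fin_cases x <;> simp [hA, hB, hC]

/-! ### The pentagon -/

theorem pentagon_isotropic_n2 (ζ : Fin 5 → Matrix (Fin 2) (Fin 2) ℂ)
    (hsym : ∀ p : Fin 5, (ζ p)ᵀ = ζ p)
    (hinv : ∀ p q : Fin 5, p ≠ q → IsUnit (ζ p - ζ q))
    (a : Fin 5 → Fin 5 → Fin 5 → Matrix (Fin 2) (Fin 2) ℂ)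
    (ha : ∀ i j k : Fin 5, i < j → j < k →
      a i j k * Gmat ζ i j k * (a i j k)ᵀ = !![0, 1; 1, 0]) :
    (∃! PQRST : Matrix (Fin 3 × Fin 2) (Fin 3 × Fin 2) ℂ ×
        Matrix (Fin 3 × Fin 2) (Fin 3 × Fin 2) ℂ ×
        Matrix (Fin 3 × Fin 2) (Fin 3 × Fin 2) ℂ ×
        Matrix (Fin 3 × Fin 2) (Fin 3 × Fin 2) ℂ ×
        Matrix (Fin 3 × Fin 2) (Fin 3 × Fin 2) ℂ,
      FlipData ζ a PQRST.1 PQRST.2.1 PQRST.2.2.1 PQRST.2.2.2.1 PQRST.2.2.2.2) ∧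
    ∀ P Q R S T : Matrix (Fin 3 × Fin 2) (Fin 3 × Fin 2) ℂ,
      FlipData ζ a P Q R S T →
        Pᵀ * J6 * P = J6 ∧ Qᵀ * J6 * Q = J6 ∧ Rᵀ * J6 * R = J6 ∧
        Sᵀ * J6 * S = J6 ∧ Tᵀ * J6 * T = J6 ∧
        Q * P = T * S * R := by
  have h10 : IsUnit (ζ 1 - ζ 0) := hinv 1 0 (by decide)
  set g : Fin 5 → Fin 5 → Fin 5 → Matrix (Fin 2) (Fin 5 × Fin 2) ℂ :=
    fun i j k => a i j k * fMat ζ i j k with hg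
  have hrel : ∀ i j k, i < j → j < k → g i j k * relMat ζ = 0 := by
    intro i j k hij hjk
    rw [hg, Matrix.mul_assoc, fMat_mul_relMat ζ hinv hij hjk, Matrix.mul_zero]
  have hself : ∀ i j k, i < j → j < k →
      g i j k * edgeForm ζ * (g i j k)ᵀ = !![0, 1; 1, 0] := by
    intro i j k hij hjk
    rw [← ha i j k hij hjk, ← fMat_gram ζ hsym hinv hij hjk, hg]
    simp only [Matrix.transpose_mul, Matrix.mul_assoc]
  have horth : ∀ i j k i₂ j₂ k₂ : Fin 5, i < j → j < k → i₂ < j₂ → j₂ < k₂ →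
      InArc i j k i₂ j₂ k₂ → g i j k * edgeForm ζ * (g i₂ j₂ k₂)ᵀ = 0 := by
    intro i j k i₂ j₂ k₂ h1 h2 h3 h4 h5
    calc _ = a i j k * (fMat ζ i j k * edgeForm ζ * (fMat ζ i₂ j₂ k₂)ᵀ) * (a i₂ j₂ k₂)ᵀ := by
          rw [hg]; simp only [Matrix.transpose_mul, Matrix.mul_assoc]
      _ = 0 := by rw [fMat_orthogonal ζ hsym hinv h3 h4 h1 h2 h5]; simp
  have hframe : ∀ i j k i₂ j₂ k₂ i₃ j₃ k₃ : Fin 5, i < j → j < k → i₂ < j₂ → j₂ < k₂ →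
      i₃ < j₃ → j₃ < k₃ → InArc i j k i₂ j₂ k₂ → InArc i j k i₃ j₃ k₃ →
      InArc i₂ j₂ k₂ i₃ j₃ k₃ →
      IsFrame ζ (stack3 (g i j k) (g i₂ j₂ k₂) (g i₃ j₃ k₃)) := by
    intro i j k i₂ j₂ k₂ i₃ j₃ k₃ h1 h2 h3 h4 h5 h6 h7 h8 h9
    exact stack3_frame hsym (hrel _ _ _ h1 h2) (hrel _ _ _ h3 h4) (hrel _ _ _ h5 h6)
      (hself _ _ _ h1 h2) (hself _ _ _ h3 h4) (hself _ _ _ h5 h6)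
      (horth _ _ _ _ _ _ h1 h2 h3 h4 h7) (horth _ _ _ _ _ _ h1 h2 h5 h6 h8)
      (horth _ _ _ _ _ _ h3 h4 h5 h6 h9)
  -- the five triangulations of the pentagon
  have F1 : IsFrame ζ (stack3 (g 0 1 3) (g 1 2 3) (g 0 3 4)) :=
    hframe 0 1 3 1 2 3 0 3 4 (by decide) (by decide) (by decide) (by decide)
      (by decide) (by decide) (by decide) (by decide) (by decide)
  have F2 : IsFrame ζ (stack3 (g 0 1 2) (g 0 2 3) (g 0 3 4)) :=
    hframe 0 1 2 0 2 3 0 3 4 (by decide) (by decide) (by decide) (by decide)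
      (by decide) (by decide) (by decide) (by decide) (by decide)
  have F3 : IsFrame ζ (stack3 (g 0 1 2) (g 0 2 4) (g 2 3 4)) :=
    hframe 0 1 2 0 2 4 2 3 4 (by decide) (by decide) (by decide) (by decide)
      (by decide) (by decide) (by decide) (by decide) (by decide)
  have F4 : IsFrame ζ (stack3 (g 0 1 4) (g 1 2 3) (g 1 3 4)) :=
    hframe 0 1 4 1 2 3 1 3 4 (by decide) (by decide) (by decide) (by decide)
      (by decide) (by decide) (by decide) (by decide) (by decide)
  have F5 : IsFrame ζ (stack3 (g 0 1 4) (g 1 2 4) (g 2 3 4)) :=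
    hframe 0 1 4 1 2 4 2 3 4 (by decide) (by decide) (by decide) (by decide)
      (by decide) (by decide) (by decide) (by decide) (by decide)
  constructor
  · obtain ⟨P, hP, hP1, hP0⟩ := F1.exists_change h10 F2 2
      (fun r => by rw [stack3_two, stack3_two])
    obtain ⟨Q, hQ, hQ1, hQ0⟩ := F2.exists_change h10 F3 0
      (fun r => by rw [stack3_zero, stack3_zero])
    obtain ⟨R, hR, hR1, hR0⟩ := F1.exists_change h10 F4 1
      (fun r => by rw [stack3_one, stack3_one])
    obtain ⟨S, hS, hS1, hS0⟩ := F4.exists_change h10 F5 0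
      (fun r => by rw [stack3_zero, stack3_zero])
    obtain ⟨T, hT, hT1, hT0⟩ := F5.exists_change h10 F3 2
      (fun r => by rw [stack3_two, stack3_two])
    refine ⟨(P, Q, R, S, T), ?_, ?_⟩
    · have n01 : (0 : Fin 3) ≠ 1 := by decide
      have n02 : (0 : Fin 3) ≠ 2 := by decide
      have n12 : (1 : Fin 3) ≠ 2 := by decide
      exact ⟨⟨(hP0 0 n02).2, (hP0 1 n12).2, (hP0 0 n02).1, (hP0 1 n12).1, hP1⟩,
        ⟨hQ1, (hQ0 1 n01.symm).1, (hQ0 2 n02.symm).1, (hQ0 1 n01.symm).2, (hQ0 2 n02.symm).2⟩,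
        ⟨(hR0 0 n01).2, (hR0 0 n01).1, hR1, (hR0 2 n12.symm).1, (hR0 2 n12.symm).2⟩,
        ⟨hS1, (hS0 1 n01.symm).1, (hS0 2 n02.symm).1, (hS0 1 n01.symm).2, (hS0 2 n02.symm).2⟩,
        ⟨(hT0 0 n02).2, (hT0 1 n12).2, (hT0 0 n02).1, (hT0 1 n12).1, hT1⟩,
        hP, hQ, hR, hS, hT⟩
    · rintro ⟨P', Q', R', S', T'⟩ ⟨-, -, -, -, -, hP', hQ', hR', hS', hT'⟩
      simp only [Prod.mk.injEq]
      exact ⟨F1.cancel (hP'.trans hP.symm), F2.cancel (hQ'.trans hQ.symm),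
        F1.cancel (hR'.trans hR.symm), F4.cancel (hS'.trans hS.symm),
        F5.cancel (hT'.trans hT.symm)⟩
  · rintro P Q R S T ⟨-, -, -, -, -, hP, hQ, hR, hS, hT⟩
    refine ⟨F1.isometry F2 hP, F2.isometry F3 hQ, F1.isometry F4 hR, F4.isometry F5 hS,
      F5.isometry F3 hT, F1.cancel ?_⟩
    -- both sides carry the first triangulation to the last one
    rw [Matrix.mul_assoc, hP, Matrix.mul_assoc, hR, Matrix.mul_assoc, hS, hT]
    exact hQ
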